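/- Assume k := 2 f''(1) + 6 f'(1) ≠ 0. Let 0 < c₀ < c_s and let ξ : (c₀, c_s) → (0,1) be continuously differentiable and satisfy, for every c ∈ (c₀, c_s): N_c(ξ(c)) = 0, N_c(x) < 0 for every x ∈ (0, ξ(c)), ∂_x N_c(ξ(c)) > 0, and ξ(c) → 0 as c → c_s⁻. Define P(c) := (c/2) ∫_0^{ξ(c)} x² / ((1−x) √(−N_c(x))) dx. Then there exists c₁ ∈ (c₀, c_s) such that P is differentiable on (c₁, c_s) and P'(c)/ν_c → −18 c_s² / k² as c → c_s⁻. -/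

import Mathlib

open Real MeasureTheory Filter Topology

/-!
Near `x = 0` one has `N_c(x) = x² (u(x) - ν_c²)`, where `u` does not depend on `c`, is `C²`, and
satisfies `u(0) = 0`, `u'(0) = -k/3`. Hence `ξ(c)` is the small solution of `u(ξ) = ν_c²`; its
existence together with `k ≠ 0` forces `u'(0) > 0`, so `u` has a `C²` local inverse `φ`. The
integrand of `P` becomes `g(x) / √(ν_c² - u(x))` with `g(x) = x / (1 - x)`, and `x = φ(ν_c² t)`
gives `P(c) = (c/2) ν_c Q(ν_c²)`, `Q(s) = ∫₀¹ (1 - t)^(-1/2) w(s t) dt`, `w = (g ∘ φ) φ'`.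

The singularity of the integrand now sits at the fixed endpoint `t = 1`, so `Q` is `C¹`, with
`Q(0) = 0` and `Q'(0) = (4/3) w'(0) = (4/3) (k/3)⁻² = 12/k²`. Since `d(ν_c²)/dc = -2c`, the function
`s ↦ √s Q(s)`, whose derivative is `~ (3/2) Q'(0) √s`, gives
`P'(c) / ν_c → -c_s² (3/2) Q'(0) = -18 c_s² / k²`.
-/

lemma starConvex_ball_zero {E : Type*} [SeminormedAddCommGroup E] [NormedSpace ℝ E] {δ : ℝ}
    (hδ : 0 < δ) : StarConvex ℝ 0 (Metric.ball (0 : E) δ) :=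
  (convex_ball 0 δ).starConvex (Metric.mem_ball_self hδ)

lemma exists_contDiffOn_ball {E F : Type*} [NormedAddCommGroup E] [NormedSpace ℝ E]
    [NormedAddCommGroup F] [NormedSpace ℝ F] {n : ℕ} {v : E → F} {x : E}
    (hv : ContDiffAt ℝ n v x) : ∃ δ > 0, ContDiffOn ℝ n v (Metric.ball x δ) := by
  obtain ⟨δ, hδ, h⟩ := Metric.eventually_nhds_iff_ball.1 (hv.eventually (by simp))
  exact ⟨δ, hδ, fun y hy ↦ (h y hy).contDiffWithinAt⟩

lemma exists_eventually_norm_dilation_le {E : Type*} [SeminormedAddCommGroup E]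
    {v : ℝ → E} {S : Set ℝ} {s : ℝ} (hS : IsOpen S) (hS0 : StarConvex ℝ 0 S) (hv : ContinuousOn v S)
    (hs : s ∈ S) :
    ∃ C, ∀ᶠ x in 𝓝 s, x ∈ S ∧ ∀ t ∈ Set.Icc (0 : ℝ) 1, ‖v (t * x)‖ ≤ C := by
  obtain ⟨L, hL, hsL, hLS⟩ := exists_compact_subset hS hs
  have h_compact : IsCompact ((fun p : ℝ × ℝ ↦ p.1 * p.2) '' Set.Icc 0 1 ×ˢ L) :=
    (isCompact_Icc.prod hL).image continuous_mul
  have h_sub : (fun p : ℝ × ℝ ↦ p.1 * p.2) '' Set.Icc 0 1 ×ˢ L ⊆ S := by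
    rintro _ ⟨⟨t, x⟩, ⟨ht, hx⟩, rfl⟩
    exact hS0.smul_mem (hLS hx) ht.1 ht.2
  obtain ⟨C, hC⟩ := h_compact.exists_bound_of_continuousOn (hv.mono h_sub)
  refine ⟨C, ?_⟩
  filter_upwards [mem_interior_iff_mem_nhds.1 hsL] with x hx
  exact ⟨hLS hx, fun t ht ↦ hC _ ⟨(t, x), ⟨ht, hx⟩, rfl⟩⟩

section DilationIntegral

variable {E : Type*} [NormedAddCommGroup E] [NormedSpace ℝ E]
  {ω : ℝ → ℝ} {v : ℝ → E} {S : Set ℝ} {s : ℝ}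

/-- The integral of `v` over the segment from `0` to `s`, rescaled to `[0, 1]` and weighted by `ω`.
It expresses both Taylor remainders (weight `1 - t`) and Abel integrals (weight `1 / √(1 - t)`). -/
noncomputable def dilationIntegral (ω : ℝ → ℝ) (v : ℝ → E) (s : ℝ) : E :=
  ∫ t in (0 : ℝ)..1, ω t • v (t * s)

lemma dilationIntegral_zero [CompleteSpace E] (ω : ℝ → ℝ) (v : ℝ → E) :
    dilationIntegral ω v 0 = (∫ t in (0 : ℝ)..1, ω t) • v 0 := by
  simp only [dilationIntegral, mul_zero, intervalIntegral.integral_smul_const]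

lemma intervalIntegrable_smul_dilation (hS0 : StarConvex ℝ 0 S)
    (hω : IntervalIntegrable ω volume 0 1) (hv : ContinuousOn v S) (hs : s ∈ S) :
    IntervalIntegrable (fun t ↦ ω t • v (t * s)) volume 0 1 := by
  refine hω.smul_continuousOn (hv.comp (by fun_prop) fun t ht ↦ ?_)
  rw [Set.uIcc_of_le zero_le_one] at ht
  exact hS0.smul_mem hs ht.1 ht.2

lemma continuousOn_dilationIntegral (hS : IsOpen S) (hS0 : StarConvex ℝ 0 S)
    (hω : IntervalIntegrable ω volume 0 1) (hv : ContinuousOn v S) :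
    ContinuousOn (dilationIntegral ω v) S := by
  intro s hs
  obtain ⟨C, hC⟩ := exists_eventually_norm_dilation_le hS hS0 hv hs
  refine (intervalIntegral.continuousAt_of_dominated_interval
    (bound := fun t ↦ ‖ω t‖ * C) ?_ ?_ (hω.norm.mul_const C) ?_).continuousWithinAt
  · filter_upwards [hS.mem_nhds hs] with x hx
    exact (intervalIntegrable_smul_dilation hS0 hω hv hx).def'.aestronglyMeasurable
  · filter_upwards [hC] with x hx
    refine Eventually.of_forall fun t ht ↦ ?_
    rw [Set.uIoc_of_le zero_le_one] at ht
    rw [norm_smul]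
    gcongr
    exact hx.2 t ⟨ht.1.le, ht.2⟩
  · refine Eventually.of_forall fun t ht ↦ ?_
    rw [Set.uIoc_of_le zero_le_one] at ht
    have hv_at : ContinuousAt v (t * s) :=
      hv.continuousAt (hS.mem_nhds (hS0.smul_mem hs ht.1.le ht.2))
    exact (hv_at.comp (f := fun x ↦ t * x) (by fun_prop)).const_smul (ω t)

lemma hasDerivAt_dilationIntegral (hS : IsOpen S) (hS0 : StarConvex ℝ 0 S)
    (hω : IntervalIntegrable ω volume 0 1) (hv : ContDiffOn ℝ 1 v S) (hs : s ∈ S) :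
    HasDerivAt (dilationIntegral ω v) (dilationIntegral (fun t ↦ t * ω t) (deriv v) s) s := by
  have hv' : ContinuousOn (deriv v) S := hv.continuousOn_deriv_of_isOpen hS le_rfl
  have htω : IntervalIntegrable (fun t ↦ t * ω t) volume 0 1 :=
    hω.continuousOn_mul continuousOn_id
  obtain ⟨C, hC⟩ := exists_eventually_norm_dilation_le hS hS0 hv' hs
  refine (intervalIntegral.hasDerivAt_integral_of_dominated_loc_of_deriv_le
    (F := fun x t ↦ ω t • v (t * x)) (F' := fun x t ↦ (t * ω t) • deriv v (t * x))
    (bound := fun t ↦ ‖t * ω t‖ * C) hC ?_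
    (intervalIntegrable_smul_dilation hS0 hω hv.continuousOn hs)
    (intervalIntegrable_smul_dilation hS0 htω hv' hs).def'.aestronglyMeasurable
    ?_ (htω.norm.mul_const C) ?_).2
  · filter_upwards [hS.mem_nhds hs] with x hx
    exact (intervalIntegrable_smul_dilation hS0 hω hv.continuousOn hx).def'.aestronglyMeasurable
  · refine Eventually.of_forall fun t ht x hx ↦ ?_
    rw [Set.uIoc_of_le zero_le_one] at ht
    rw [norm_smul]
    gcongr
    exact hx.2 t ⟨ht.1.le, ht.2⟩
  · refine Eventually.of_forall fun t ht x hx ↦ ?_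
    rw [Set.uIoc_of_le zero_le_one] at ht
    have hv_at : HasDerivAt v (deriv v (t * x)) (t * x) :=
      ((hv.differentiableOn one_ne_zero).differentiableAt
        (hS.mem_nhds (hS0.smul_mem hx.1 ht.1.le ht.2))).hasDerivAt
    refine ((hv_at.scomp x (hasDerivAt_const_mul t)).const_smul (ω t)).congr_deriv ?_
    rw [smul_smul, mul_comm]

lemma contDiffOn_dilationIntegral (hS : IsOpen S) (hS0 : StarConvex ℝ 0 S) (n : ℕ)
    (hω : IntervalIntegrable ω volume 0 1) (hv : ContDiffOn ℝ n v S) :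
    ContDiffOn ℝ n (dilationIntegral ω v) S := by
  induction n generalizing ω v with
  | zero =>
    rw [Nat.cast_zero, contDiffOn_zero] at hv ⊢
    exact continuousOn_dilationIntegral hS hS0 hω hv
  | succ n ih =>
    have h_deriv : ∀ s ∈ S, HasDerivAt (dilationIntegral ω v)
        (dilationIntegral (fun t ↦ t * ω t) (deriv v) s) s := fun s hs ↦
      hasDerivAt_dilationIntegral hS hS0 hω (hv.of_le (mod_cast Nat.le_add_left 1 n)) hs
    rw [Nat.cast_succ, contDiffOn_succ_iff_deriv_of_isOpen hS] at hv ⊢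
    refine ⟨fun s hs ↦ (h_deriv s hs).differentiableAt.differentiableWithinAt, by simp, ?_⟩
    exact (ih (hω.continuousOn_mul continuousOn_id) hv.2.2).congr fun s hs ↦ (h_deriv s hs).deriv

lemma contDiffAt_dilationIntegral_zero {n : ℕ} (hω : IntervalIntegrable ω volume 0 1)
    (hv : ContDiffAt ℝ n v 0) : ContDiffAt ℝ n (dilationIntegral ω v) 0 := by
  obtain ⟨δ, hδ, hvδ⟩ := exists_contDiffOn_ball hv
  have h_on := contDiffOn_dilationIntegral Metric.isOpen_ball (starConvex_ball_zero hδ) n hω hvδ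
  exact h_on.contDiffAt (Metric.ball_mem_nhds 0 hδ)

lemma hasDerivAt_dilationIntegral_zero [CompleteSpace E] (hω : IntervalIntegrable ω volume 0 1)
    (hv : ContDiffAt ℝ 1 v 0) :
    HasDerivAt (dilationIntegral ω v) ((∫ t in (0 : ℝ)..1, t * ω t) • deriv v 0) 0 := by
  obtain ⟨δ, hδ, hvδ⟩ := exists_contDiffOn_ball (n := 1) hv
  rw [← dilationIntegral_zero]
  exact hasDerivAt_dilationIntegral Metric.isOpen_ball (starConvex_ball_zero hδ) hω hvδ
    (Metric.mem_ball_self hδ)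

lemma taylor_two_eq_dilationIntegral [CompleteSpace E] {G G' G'' : ℝ → E}
    (hS0 : StarConvex ℝ 0 S) (hG : ∀ x ∈ S, HasDerivAt G (G' x) x)
    (hG' : ∀ x ∈ S, HasDerivAt G' (G'' x) x) (hG'' : ContinuousOn G'' S) {x : ℝ} (hx : x ∈ S) :
    G x = G 0 + x • G' 0 + x ^ 2 • dilationIntegral (fun t ↦ 1 - t) G'' x := by
  have h_deriv : ∀ t ∈ Set.uIcc (0 : ℝ) 1,
      HasDerivAt (fun t ↦ G (t * x) + ((1 - t) * x) • G' (t * x))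
        (x ^ 2 • (1 - t) • G'' (t * x)) t := by
    intro t ht
    rw [Set.uIcc_of_le zero_le_one] at ht
    have htx : t * x ∈ S := hS0.smul_mem hx ht.1 ht.2
    have h_dil : HasDerivAt (fun t ↦ t * x) x t := hasDerivAt_mul_const x
    have h_weight : HasDerivAt (fun t ↦ (1 - t) * x) (-1 * x) t :=
      ((hasDerivAt_id t).const_sub 1).mul_const x
    refine (((hG _ htx).scomp t h_dil).add
      (h_weight.smul ((hG' _ htx).scomp t h_dil))).congr_deriv ?_
    simp only [Function.comp_apply]
    module
  have h_int : IntervalIntegrable (fun t ↦ (1 - t) • G'' (t * x)) volume 0 1 :=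
    intervalIntegrable_smul_dilation hS0
      (Continuous.intervalIntegrable (by fun_prop) 0 1) hG'' hx
  have h_ftc := intervalIntegral.integral_eq_sub_of_hasDerivAt h_deriv (h_int.smul (x ^ 2))
  simp only [intervalIntegral.integral_smul, one_mul, zero_mul, sub_self, zero_smul, add_zero,
    sub_zero] at h_ftc
  rw [dilationIntegral, h_ftc, add_sub_cancel]

end DilationIntegral

lemma exists_contDiffAt_local_inverse {𝕜 : Type*} [RCLike 𝕜] {n : WithTop ℕ∞} {u : 𝕜 → 𝕜}
    {x₀ a : 𝕜} (hu : ContDiffAt 𝕜 n u x₀) (hn : n ≠ 0) (hua : HasDerivAt u a x₀) (ha : a ≠ 0) :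
    ∃ φ : 𝕜 → 𝕜, ContDiffAt 𝕜 n φ (u x₀) ∧ HasDerivAt φ a⁻¹ (u x₀) ∧
      (∀ᶠ x in 𝓝 x₀, φ (u x) = x) ∧ ∀ᶠ y in 𝓝 (u x₀), u (φ y) = y := by
  have hua' := hua.hasFDerivAt_equiv ha
  have h_strict := hu.hasStrictFDerivAt' hua' hn
  exact ⟨hu.localInverse hua' hn, hu.to_localInverse hua' hn,
    h_strict.to_localInverse.hasFDerivAt.hasDerivAt.congr_deriv (by simp),
    h_strict.eventually_left_inverse, h_strict.eventually_right_inverse⟩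

lemma intervalIntegrable_inv_sqrt_one_sub :
    IntervalIntegrable (fun t ↦ (√(1 - t))⁻¹) volume 0 1 := by
  have h_rpow : IntervalIntegrable (fun x : ℝ ↦ x ^ (-(1 / 2) : ℝ)) volume 0 1 :=
    intervalIntegral.intervalIntegrable_rpow' (by norm_num)
  have h_refl := (h_rpow.comp_sub_left 1).symm
  rw [sub_self, sub_zero] at h_refl
  refine h_refl.congr fun t ht ↦ ?_
  rw [Set.uIoc_of_le zero_le_one] at ht
  simp only [rpow_neg (sub_nonneg.2 ht.2), sqrt_eq_rpow]

lemma integral_mul_inv_sqrt_one_sub : ∫ t in (0 : ℝ)..1, t * (√(1 - t))⁻¹ = 4 / 3 := by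
  have h_reflect : ∫ t in (0 : ℝ)..1, t * (√(1 - t))⁻¹ =
      ∫ x in (0 : ℝ)..1, (x ^ (-(1 / 2) : ℝ) - x ^ (1 / 2 : ℝ)) := by
    have h_sub := intervalIntegral.integral_comp_sub_left (a := 0) (b := 1)
      (fun x : ℝ ↦ (1 - x) * (√x)⁻¹) 1
    simp only [sub_sub_cancel, sub_self, sub_zero] at h_sub
    rw [h_sub]
    refine intervalIntegral.integral_congr fun x hx ↦ ?_
    rw [Set.uIcc_of_le zero_le_one] at hx
    simp only [rpow_neg hx.1, ← sqrt_eq_rpow]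
    rw [sub_mul, one_mul, ← div_eq_mul_inv, div_sqrt]
  rw [h_reflect, intervalIntegral.integral_sub
    (intervalIntegral.intervalIntegrable_rpow' (by norm_num))
    (intervalIntegral.intervalIntegrable_rpow' (by norm_num)),
    integral_rpow (by norm_num), integral_rpow (by norm_num)]
  norm_num

lemma integral_div_sqrt_sub_eq_dilationIntegral {u φ g : ℝ → ℝ} {s : ℝ} (hs : 0 ≤ s)
    (hφ : ∀ y ∈ Set.Icc 0 s, DifferentiableAt ℝ φ y) (hφ' : ∀ y ∈ Set.Icc 0 s, 0 ≤ deriv φ y)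
    (huφ : ∀ y ∈ Set.Icc 0 s, u (φ y) = y) :
    ∫ x in φ 0..φ s, g x / √(s - u x) =
      √s * dilationIntegral (fun t ↦ (√(1 - t))⁻¹) (fun y ↦ g (φ y) * deriv φ y) s := by
  have h_mem : ∀ t ∈ Set.Icc (0 : ℝ) 1, t * s ∈ Set.Icc 0 s := fun t ht ↦
    ⟨mul_nonneg ht.1 hs, mul_le_of_le_one_left hs ht.2⟩
  have h_deriv : ∀ t ∈ Set.Icc (0 : ℝ) 1,
      HasDerivAt (fun t ↦ φ (t * s)) (deriv φ (t * s) * s) t := fun t ht ↦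
    (hφ _ (h_mem t ht)).hasDerivAt.comp t (hasDerivAt_mul_const s)
  have h_subst := intervalIntegral.integral_deriv_smul_comp_of_deriv_nonneg (a := 0) (b := 1)
    (f := fun t ↦ φ (t * s)) (f' := fun t ↦ deriv φ (t * s) * s)
    (g := fun x ↦ g x / √(s - u x))
    (by
      rw [Set.uIcc_of_le zero_le_one]
      exact fun t ht ↦ (h_deriv t ht).continuousAt.continuousWithinAt)
    (by simpa using fun t h0 h1 ↦ h_deriv t ⟨h0.le, h1.le⟩)
    (by simpa using fun t h0 h1 ↦ mul_nonneg (hφ' _ (h_mem t ⟨h0.le, h1.le⟩)) hs)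
  rw [zero_mul, one_mul] at h_subst
  rw [← h_subst, dilationIntegral, ← intervalIntegral.integral_const_mul]
  refine intervalIntegral.integral_congr fun t ht ↦ ?_
  rw [Set.uIcc_of_le zero_le_one] at ht
  have h_sqrt : √(s - u (φ (t * s))) = √s * √(1 - t) := by
    rw [huφ _ (h_mem t ht), ← sqrt_mul hs]
    ring_nf
  simp only [smul_eq_mul, Function.comp_apply, h_sqrt]
  calc deriv φ (t * s) * s * (g (φ (t * s)) / (√s * √(1 - t)))
      = s / √s * ((√(1 - t))⁻¹ * (g (φ (t * s)) * deriv φ (t * s))) := by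
        simp only [div_eq_mul_inv, mul_inv]; ring
    _ = √s * ((√(1 - t))⁻¹ * (g (φ (t * s)) * deriv φ (t * s))) := by rw [div_sqrt]

lemma eventually_forall_mem_Icc {α : Type*} {l : Filter α} {p : ℝ → Prop} {f : α → ℝ} {x₀ : ℝ}
    (hf : Tendsto f l (𝓝 x₀)) (hp : ∀ᶠ x in 𝓝 x₀, p x) :
    ∀ᶠ a in l, ∀ x ∈ Set.Icc x₀ (f a), p x :=
  (tendsto_const_nhds.Icc hf).eventually hp.smallSets

lemma eventually_pos_nhdsGT_of_hasDerivAt {u : ℝ → ℝ} {a x₀ : ℝ} (hu : HasDerivAt u a x₀)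
    (hu0 : u x₀ = 0) (ha : 0 < a) : ∀ᶠ x in 𝓝[>] x₀, 0 < u x := by
  filter_upwards [nhdsWithin_le_nhds
    (eventually_nhdsWithin_sign_eq_of_deriv_pos (hu.deriv.symm ▸ ha) hu0), self_mem_nhdsWithin]
    with x h_sign (hx : x₀ < x)
  rwa [← sign_eq_one_iff, h_sign, sign_eq_one_iff, sub_pos]

lemma hasDerivAt_comp_mul_deriv {g φ : ℝ → ℝ} {x₀ y₀ : ℝ} (hg : DifferentiableAt ℝ g x₀)
    (hφ : DifferentiableAt ℝ φ y₀) (hφ' : DifferentiableAt ℝ (deriv φ) y₀)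
    (hφ0 : φ y₀ = x₀) (hg0 : g x₀ = 0) :
    HasDerivAt (fun y ↦ g (φ y) * deriv φ y) (deriv g x₀ * deriv φ y₀ ^ 2) y₀ := by
  subst hφ0
  refine ((hg.hasDerivAt.comp y₀ hφ.hasDerivAt).mul hφ'.hasDerivAt).congr_deriv ?_
  rw [Function.comp_apply, hg0]
  ring

lemma exists_integral_div_sqrt_sub_eq {u g : ℝ → ℝ} {a : ℝ} (hu : ContDiffAt ℝ 2 u 0)
    (hu0 : u 0 = 0) (hua : HasDerivAt u a 0) (ha : 0 < a) (hg : ContDiffAt ℝ 1 g 0)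
    (hg0 : g 0 = 0) :
    ∃ Q : ℝ → ℝ, ContDiffAt ℝ 1 Q 0 ∧ Q 0 = 0 ∧ deriv Q 0 = 4 / 3 * (deriv g 0 * a⁻¹ ^ 2) ∧
      ∀ᶠ x in 𝓝[>] 0, ∫ y in (0 : ℝ)..x, g y / √(u x - u y) = √(u x) * Q (u x) := by
  obtain ⟨φ, hφ, hφ_deriv, h_left, h_right⟩ :=
    exists_contDiffAt_local_inverse hu two_ne_zero hua ha.ne'
  have hφ0 : φ (u 0) = 0 := h_left.self_of_nhds
  rw [hu0] at hφ hφ_deriv h_right hφ0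
  have hφ' : ContDiffAt ℝ 1 (deriv φ) 0 := hφ.derivWithin (by norm_num)
  have hw : ContDiffAt ℝ 1 (fun y ↦ g (φ y) * deriv φ y) 0 :=
    (ContDiffAt.comp 0 (hφ0.symm ▸ hg) (hφ.of_le one_le_two)).mul hφ'
  have hw_deriv : HasDerivAt (fun y ↦ g (φ y) * deriv φ y) (deriv g 0 * a⁻¹ ^ 2) 0 := by
    simpa only [hφ0, hφ_deriv.deriv] using hasDerivAt_comp_mul_deriv
      (hg.differentiableAt one_ne_zero) hφ_deriv.differentiableAt
      (hφ'.differentiableAt one_ne_zero) hφ0 hg0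
  have hφ_nice : ∀ᶠ y in 𝓝 0, DifferentiableAt ℝ φ y ∧ 0 ≤ deriv φ y ∧ u (φ y) = y := by
    have h_pos : ∀ᶠ y in 𝓝 0, 0 < deriv φ y :=
      hφ'.continuousAt.eventually (lt_mem_nhds (hφ_deriv.deriv.symm ▸ inv_pos.2 ha))
    filter_upwards [hφ.eventually (by simp), h_pos, h_right] with y h_smooth h_pos h_right
    exact ⟨h_smooth.differentiableAt two_ne_zero, h_pos.le, h_right⟩
  have hu_tendsto : Tendsto u (𝓝[>] 0) (𝓝 0) :=
    (hu0 ▸ hua.continuousAt.tendsto).mono_left nhdsWithin_le_nhds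
  refine ⟨dilationIntegral (fun t ↦ (√(1 - t))⁻¹) (fun y ↦ g (φ y) * deriv φ y),
    contDiffAt_dilationIntegral_zero intervalIntegrable_inv_sqrt_one_sub hw, ?_, ?_, ?_⟩
  · rw [dilationIntegral_zero, hφ0, hg0, zero_mul, smul_zero]
  · rw [(hasDerivAt_dilationIntegral_zero intervalIntegrable_inv_sqrt_one_sub hw).deriv,
      integral_mul_inv_sqrt_one_sub, hw_deriv.deriv, smul_eq_mul]
  · filter_upwards [eventually_pos_nhdsGT_of_hasDerivAt hua hu0 ha,
      eventually_forall_mem_Icc hu_tendsto hφ_nice, nhdsWithin_le_nhds h_left]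
      with x hx hφ_nice h_left
    have h_subst := integral_div_sqrt_sub_eq_dilationIntegral (g := g) hx.le
      (fun y hy ↦ (hφ_nice y hy).1) (fun y hy ↦ (hφ_nice y hy).2.1)
      (fun y hy ↦ (hφ_nice y hy).2.2)
    rwa [hφ0, h_left] at h_subst

lemma tendsto_deriv_sqrt_mul_div_sqrt {Q : ℝ → ℝ} (hQ : ContDiffAt ℝ 1 Q 0) (hQ0 : Q 0 = 0) :
    Tendsto (fun s ↦ deriv (fun s ↦ √s * Q s) s / √s) (𝓝[>] 0) (𝓝 (3 / 2 * deriv Q 0)) := by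
  have h_slope : Tendsto (slope Q 0) (𝓝[>] 0) (𝓝 (deriv Q 0)) :=
    (hQ.differentiableAt one_ne_zero).hasDerivAt.tendsto_slope.mono_left (nhdsGT_le_nhdsNE 0)
  have h_deriv : Tendsto (deriv Q) (𝓝[>] 0) (𝓝 (deriv Q 0)) :=
    (hQ.derivWithin (m := 0) (by norm_num)).continuousAt.tendsto.mono_left nhdsWithin_le_nhds
  have h_lim := (h_slope.const_mul (1 / 2)).add h_deriv
  rw [show 1 / 2 * deriv Q 0 + deriv Q 0 = 3 / 2 * deriv Q 0 by ring] at h_lim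
  refine h_lim.congr' ?_
  filter_upwards [self_mem_nhdsWithin, nhdsWithin_le_nhds (hQ.eventually (by simp))]
    with s (hs : 0 < s) hQs
  have h_mul : HasDerivAt (fun s ↦ √s * Q s) (1 / (2 * √s) * Q s + √s * deriv Q s) s :=
    (hasDerivAt_sqrt hs.ne').mul (hQs.differentiableAt one_ne_zero).hasDerivAt
  have h_sqrt : √s ≠ 0 := (sqrt_pos.2 hs).ne'
  rw [h_mul.deriv, slope_def_field, hQ0, sub_zero, sub_zero]
  field_simp [h_sqrt]
  rw [sq_sqrt hs.le]
  ring

lemma tendsto_sq_sub_sq_nhdsLT {b : ℝ} (hb : 0 < b) :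
    Tendsto (fun c ↦ b ^ 2 - c ^ 2) (𝓝[<] b) (𝓝[>] 0) := by
  refine tendsto_nhdsWithin_iff.2 ⟨?_, ?_⟩
  · have h_cont : Continuous fun c : ℝ ↦ b ^ 2 - c ^ 2 := by fun_prop
    exact (sub_self (b ^ 2) ▸ h_cont.tendsto b).mono_left nhdsWithin_le_nhds
  · filter_upwards [Ioo_mem_nhdsLT hb] with c hc
    exact sub_pos.2 (pow_lt_pow_left₀ hc.2 hc.1.le two_ne_zero)

lemma eventually_hasDerivAt_half_mul_comp_sq_sub_sq {P R : ℝ → ℝ} {b : ℝ} (hb : 0 < b)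
    (hR : ∀ᶠ s in 𝓝[>] 0, DifferentiableAt ℝ R s)
    (hP : ∀ᶠ c in 𝓝[<] b, P c = c / 2 * R (b ^ 2 - c ^ 2)) :
    ∀ᶠ c in 𝓝[<] b,
      HasDerivAt P (R (b ^ 2 - c ^ 2) / 2 - c ^ 2 * deriv R (b ^ 2 - c ^ 2)) c := by
  filter_upwards [(tendsto_sq_sub_sq_nhdsLT hb).eventually hR,
    eventually_eventually_nhdsWithin.2 hP, self_mem_nhdsWithin] with c hRc hPc (hc : c < b)
  have h_inner : HasDerivAt (fun c : ℝ ↦ b ^ 2 - c ^ 2) (-(2 * c)) c := by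
    simpa using (hasDerivAt_pow 2 c).const_sub (b ^ 2)
  have h_prod := ((hasDerivAt_id c).div_const 2).mul (hRc.hasDerivAt.comp c h_inner)
  rw [isOpen_Iio.nhdsWithin_eq hc] at hPc
  refine (h_prod.congr_of_eventuallyEq hPc).congr_deriv ?_
  simp only [Function.comp_apply, id_eq]
  ring

lemma eventually_hasDerivAt_half_mul_sqrt_mul {P Q : ℝ → ℝ} {b : ℝ} (hb : 0 < b)
    (hQ : ContDiffAt ℝ 1 Q 0)
    (hP : ∀ᶠ c in 𝓝[<] b, P c = c / 2 * (√(b ^ 2 - c ^ 2) * Q (b ^ 2 - c ^ 2))) :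
    ∀ᶠ c in 𝓝[<] b, HasDerivAt P (√(b ^ 2 - c ^ 2) * Q (b ^ 2 - c ^ 2) / 2 -
      c ^ 2 * deriv (fun s ↦ √s * Q s) (b ^ 2 - c ^ 2)) c := by
  refine eventually_hasDerivAt_half_mul_comp_sq_sub_sq (R := fun s ↦ √s * Q s) hb ?_ hP
  filter_upwards [self_mem_nhdsWithin, nhdsWithin_le_nhds (hQ.eventually (by simp))]
    with s (hs : 0 < s) hQs
  exact (hasDerivAt_sqrt hs.ne').differentiableAt.mul (hQs.differentiableAt one_ne_zero)

lemma tendsto_deriv_div_sqrt_sq_sub_sq {P Q : ℝ → ℝ} {b : ℝ} (hb : 0 < b)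
    (hQ : ContDiffAt ℝ 1 Q 0) (hQ0 : Q 0 = 0)
    (hP : ∀ᶠ c in 𝓝[<] b, P c = c / 2 * (√(b ^ 2 - c ^ 2) * Q (b ^ 2 - c ^ 2))) :
    Tendsto (fun c ↦ deriv P c / √(b ^ 2 - c ^ 2)) (𝓝[<] b)
      (𝓝 (-(3 / 2 * b ^ 2 * deriv Q 0))) := by
  have h_sq := tendsto_sq_sub_sq_nhdsLT hb
  have hQ_lim : Tendsto (fun c ↦ Q (b ^ 2 - c ^ 2)) (𝓝[<] b) (𝓝 0) :=
    (hQ0 ▸ hQ.continuousAt.tendsto).comp (h_sq.mono_right nhdsWithin_le_nhds)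
  have hc_lim : Tendsto (fun c : ℝ ↦ c ^ 2) (𝓝[<] b) (𝓝 (b ^ 2)) :=
    (continuous_pow 2).continuousWithinAt
  have h_lim := (hQ_lim.div_const 2).sub
    (hc_lim.mul ((tendsto_deriv_sqrt_mul_div_sqrt hQ hQ0).comp h_sq))
  rw [show 0 / 2 - b ^ 2 * (3 / 2 * deriv Q 0) = -(3 / 2 * b ^ 2 * deriv Q 0) by ring] at h_lim
  refine h_lim.congr' ?_
  filter_upwards [eventually_hasDerivAt_half_mul_sqrt_mul hb hQ hP,
    h_sq.eventually self_mem_nhdsWithin] with c hPc (hc : 0 < b ^ 2 - c ^ 2)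
  have h_sqrt : √(b ^ 2 - c ^ 2) ≠ 0 := (sqrt_pos.2 hc).ne'
  rw [hPc.deriv, Function.comp_apply]
  field_simp [h_sqrt]

lemma hasDerivAt_integral_sub_left {f : ℝ → ℝ} {b δ x : ℝ}
    (hf : ContinuousOn f (Metric.ball b δ)) (hx : x ∈ Metric.ball 0 δ) :
    HasDerivAt (fun x ↦ ∫ ρ in (b - x)..b, f ρ) (f (b - x)) x := by
  have hδ : 0 < δ := Metric.pos_of_mem_ball hx
  have hbx : b - x ∈ Metric.ball b δ := by simpa using hx
  have h_int : IntervalIntegrable f volume (b - x) b :=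
    (hf.mono (((convex_ball b δ).ordConnected).uIcc_subset hbx
      (Metric.mem_ball_self hδ))).intervalIntegrable
  have h_left : HasDerivAt (fun r ↦ ∫ ρ in r..b, f ρ) (-f (b - x)) (b - x) :=
    intervalIntegral.integral_hasDerivAt_left h_int
      (hf.stronglyMeasurableAtFilter Metric.isOpen_ball _ hbx)
      (hf.continuousAt (Metric.isOpen_ball.mem_nhds hbx))
  simpa only [neg_neg] using h_left.comp_const_sub b x

lemma eventually_integral_sub_left_eq {f : ℝ → ℝ} {b : ℝ} (hf : ContDiffAt ℝ 1 f b) :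
    ∀ᶠ x in 𝓝 0, ∫ ρ in (b - x)..b, f ρ =
      x * f b - x ^ 2 * dilationIntegral (fun t ↦ 1 - t) (fun y ↦ deriv f (b - y)) x := by
  obtain ⟨δ, hδ, hfδ⟩ := exists_contDiffOn_ball (n := 1) hf
  have h_maps : ∀ x ∈ Metric.ball 0 δ, b - x ∈ Metric.ball b δ := fun x hx ↦ by simpa using hx
  have hf_deriv : ∀ x ∈ Metric.ball 0 δ,
      HasDerivAt (fun x ↦ f (b - x)) (-deriv f (b - x)) x := fun x hx ↦ by
    have hf_at := (hfδ.differentiableOn one_ne_zero).differentiableAt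
      (Metric.isOpen_ball.mem_nhds (h_maps x hx))
    exact hf_at.hasDerivAt.comp_const_sub b x
  have hf'_cont : ContinuousOn (fun x ↦ -deriv f (b - x)) (Metric.ball 0 δ) :=
    ((hfδ.continuousOn_deriv_of_isOpen Metric.isOpen_ball le_rfl).comp
      (by fun_prop) h_maps).neg
  filter_upwards [Metric.ball_mem_nhds 0 hδ] with x hx
  have h_taylor := taylor_two_eq_dilationIntegral (starConvex_ball_zero hδ)
    (fun x hx ↦ hasDerivAt_integral_sub_left hfδ.continuousOn hx) hf_deriv hf'_cont hx
  simpa [dilationIntegral, sub_eq_add_neg] using h_taylor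

lemma integral_one_sub : ∫ t in (0 : ℝ)..1, (1 - t) = 1 / 2 := by
  rw [intervalIntegral.integral_sub (by simp) (by simp)]
  norm_num

lemma integral_mul_one_sub : ∫ t in (0 : ℝ)..1, t * (1 - t) = 1 / 6 := by
  simp only [mul_sub, mul_one, ← sq]
  rw [intervalIntegral.integral_sub (by simp) (by simp)]
  norm_num

/-- The function `u` with `N_c(x) = x² (u(x) - ν_c²)` near `x = 0`: it vanishes at `0` and does not
depend on `c`, so the roots of `N_c` near `0` are the solutions of `u(x) = ν_c²`. -/
noncomputable def sonicProfile (f : ℝ → ℝ) (x : ℝ) : ℝ :=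
  4 * (1 - x) * dilationIntegral (fun t ↦ 1 - t) (fun y ↦ deriv f (1 - y)) x - 2 * deriv f 1

section SonicProfile

variable {f : ℝ → ℝ}

lemma sonicProfile_zero (f : ℝ → ℝ) : sonicProfile f 0 = 0 := by
  rw [sonicProfile, dilationIntegral_zero, integral_one_sub, smul_eq_mul, sub_zero]
  ring

lemma contDiffAt_deriv_one_sub (hf : ContDiffAt ℝ 3 f 1) :
    ContDiffAt ℝ 2 (fun y ↦ deriv f (1 - y)) 0 := by
  have hf' : ContDiffAt ℝ 2 (deriv f) (1 - 0) := by
    rw [sub_zero]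
    exact hf.derivWithin (by norm_num)
  exact hf'.comp 0 (by fun_prop)

lemma contDiffAt_sonicProfile_zero (hf : ContDiffAt ℝ 3 f 1) :
    ContDiffAt ℝ 2 (sonicProfile f) 0 := by
  have h_rem : ContDiffAt ℝ 2
      (dilationIntegral (fun t ↦ 1 - t) fun y ↦ deriv f (1 - y)) 0 :=
    contDiffAt_dilationIntegral_zero (Continuous.intervalIntegrable (by fun_prop) 0 1)
      (contDiffAt_deriv_one_sub hf)
  unfold sonicProfile
  fun_prop

lemma hasDerivAt_sonicProfile_zero (hf : ContDiffAt ℝ 3 f 1) :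
    HasDerivAt (sonicProfile f) (-(2 * deriv (deriv f) 1 + 6 * deriv f 1) / 3) 0 := by
  have h_rem := hasDerivAt_dilationIntegral_zero (ω := fun t ↦ 1 - t)
    (Continuous.intervalIntegrable (by fun_prop) 0 1)
    ((contDiffAt_deriv_one_sub hf).of_le one_le_two)
  have h_lin : HasDerivAt (fun x : ℝ ↦ 4 * (1 - x)) (4 * -1) 0 :=
    ((hasDerivAt_id 0).const_sub 1).const_mul 4
  refine ((h_lin.mul h_rem).sub_const _).congr_deriv ?_
  rw [dilationIntegral_zero, integral_one_sub, integral_mul_one_sub, deriv_comp_const_sub]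
  simp only [smul_eq_mul, sub_zero]
  ring

lemma eventually_eq_sq_mul_sonicProfile_sub (hf : ContDiffAt ℝ 1 f 1) (hf1 : f 1 = 0) :
    ∀ᶠ x in 𝓝 0, ∀ c : ℝ, c ^ 2 * x ^ 2 - 4 * (1 - x) * ∫ ρ in (1 - x)..1, f ρ =
      x ^ 2 * (sonicProfile f x - (-(2 * deriv f 1) - c ^ 2)) := by
  filter_upwards [eventually_integral_sub_left_eq hf] with x hx c
  rw [hx, hf1, sonicProfile]
  ring

end SonicProfile

lemma nonneg_of_hasDerivAt_of_frequently_nonneg {u : ℝ → ℝ} {a x₀ : ℝ} (hu : HasDerivAt u a x₀)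
    (hu0 : u x₀ = 0) (h : ∃ᶠ x in 𝓝[>] x₀, 0 ≤ u x) : 0 ≤ a := by
  by_contra! ha
  refine h ?_
  filter_upwards [eventually_pos_nhdsGT_of_hasDerivAt hu.neg (by simp [hu0]) (neg_pos.2 ha)]
    with x hx
  simpa using hx

lemma sq_div_mul_sqrt_sq_mul {x : ℝ} (hx : 0 ≤ x) (y : ℝ) :
    x ^ 2 / ((1 - x) * √(x ^ 2 * y)) = x / (1 - x) / √y := by
  rw [sqrt_mul (sq_nonneg x), sqrt_sq hx]
  rcases hx.eq_or_lt with rfl | hx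
  · simp
  · field_simp

lemma eventually_sonicProfile_eq_of_root {α : Type*} {l : Filter α} {f : ℝ → ℝ} {γ ξ : α → ℝ}
    (hf : ContDiffAt ℝ 1 f 1) (hf1 : f 1 = 0) (hξ : Tendsto ξ l (𝓝[>] 0))
    (h_root : ∀ᶠ a in l,
      γ a ^ 2 * ξ a ^ 2 - 4 * (1 - ξ a) * ∫ ρ in (1 - ξ a)..1, f ρ = 0) :
    ∀ᶠ a in l, sonicProfile f (ξ a) = -(2 * deriv f 1) - γ a ^ 2 := by
  filter_upwards [h_root, hξ.eventually self_mem_nhdsWithin,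
    hξ.eventually (nhdsWithin_le_nhds (eventually_eq_sq_mul_sonicProfile_sub hf hf1))]
    with a h_root (h_pos : 0 < ξ a) h_eq
  rw [h_eq] at h_root
  exact sub_eq_zero.1 ((mul_eq_zero.1 h_root).resolve_left (pow_ne_zero 2 h_pos.ne'))

lemma eventually_momentum_integral_eq {f : ℝ → ℝ} (hf : ContDiffAt ℝ 1 f 1) (hf1 : f 1 = 0) :
    ∀ᶠ x in 𝓝[>] 0, ∀ c : ℝ, sonicProfile f x = -(2 * deriv f 1) - c ^ 2 →
      ∫ y in (0 : ℝ)..x,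
        y ^ 2 / ((1 - y) * √(-(c ^ 2 * y ^ 2 - 4 * (1 - y) * ∫ ρ in (1 - y)..1, f ρ))) =
      ∫ y in (0 : ℝ)..x, y / (1 - y) / √(sonicProfile f x - sonicProfile f y) := by
  have h_id : Tendsto id (𝓝[>] (0 : ℝ)) (𝓝 0) := tendsto_id.mono_left nhdsWithin_le_nhds
  filter_upwards [self_mem_nhdsWithin,
    eventually_forall_mem_Icc h_id (eventually_eq_sq_mul_sonicProfile_sub hf hf1)]
    with x (hx : 0 < x) h_eq c h_root
  refine intervalIntegral.integral_congr fun y hy ↦ ?_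
  rw [Set.uIcc_of_le hx.le] at hy
  simp only [h_eq y hy c, ← h_root]
  rw [← mul_neg, neg_sub, sq_div_mul_sqrt_sq_mul hy.1]

lemma hasDerivAt_div_one_sub_zero : HasDerivAt (fun x : ℝ ↦ x / (1 - x)) 1 0 :=
  ((hasDerivAt_id 0).div ((hasDerivAt_id 0).const_sub 1) (by simp)).congr_deriv (by simp)

lemma deriv_sonicProfile_zero_pos_of_root {f ξ : ℝ → ℝ} {b : ℝ} (hb : 0 < b)
    (hf : ContDiffAt ℝ 3 f 1) (hk : 2 * deriv (deriv f) 1 + 6 * deriv f 1 ≠ 0)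
    (hξ : Tendsto ξ (𝓝[<] b) (𝓝[>] 0))
    (h_root : ∀ᶠ c in 𝓝[<] b, sonicProfile f (ξ c) = b ^ 2 - c ^ 2) :
    0 < deriv (sonicProfile f) 0 := by
  have h_nonneg : ∀ᶠ c in 𝓝[<] b, 0 ≤ sonicProfile f (ξ c) := by
    filter_upwards [h_root, (tendsto_sq_sub_sq_nhdsLT hb).eventually self_mem_nhdsWithin]
      with c h_root (h_pos : 0 < b ^ 2 - c ^ 2)
    exact h_root ▸ h_pos.le
  have h_slope := nonneg_of_hasDerivAt_of_frequently_nonneg (hasDerivAt_sonicProfile_zero hf)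
    (sonicProfile_zero f) (hξ.frequently h_nonneg.frequently)
  rw [(hasDerivAt_sonicProfile_zero hf).deriv]
  exact h_slope.lt_of_ne' (div_ne_zero (neg_ne_zero.2 hk) three_ne_zero)

lemma exists_momentum_eq_half_mul_sqrt_mul {f ξ P : ℝ → ℝ} {b : ℝ} (hb : 0 < b)
    (hb2 : b ^ 2 = -(2 * deriv f 1)) (hf : ContDiffAt ℝ 3 f 1) (hf1 : f 1 = 0)
    (hk : 2 * deriv (deriv f) 1 + 6 * deriv f 1 ≠ 0) (hξ : Tendsto ξ (𝓝[<] b) (𝓝[>] 0))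
    (h_root : ∀ᶠ c in 𝓝[<] b,
      c ^ 2 * ξ c ^ 2 - 4 * (1 - ξ c) * ∫ ρ in (1 - ξ c)..1, f ρ = 0)
    (hP : ∀ᶠ c in 𝓝[<] b, P c = c / 2 * ∫ x in (0 : ℝ)..ξ c,
      x ^ 2 / ((1 - x) * √(-(c ^ 2 * x ^ 2 - 4 * (1 - x) * ∫ ρ in (1 - x)..1, f ρ)))) :
    ∃ Q : ℝ → ℝ, ContDiffAt ℝ 1 Q 0 ∧ Q 0 = 0 ∧
      deriv Q 0 = 12 / (2 * deriv (deriv f) 1 + 6 * deriv f 1) ^ 2 ∧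
      ∀ᶠ c in 𝓝[<] b, P c = c / 2 * (√(b ^ 2 - c ^ 2) * Q (b ^ 2 - c ^ 2)) := by
  have hf_one : ContDiffAt ℝ 1 f 1 := hf.of_le (by norm_num)
  have h_profile := eventually_sonicProfile_eq_of_root hf_one hf1 hξ h_root
  rw [← hb2] at h_profile
  have hg : ContDiffAt ℝ 1 (fun x : ℝ ↦ x / (1 - x)) 0 :=
    contDiffAt_id.div (contDiffAt_const.sub contDiffAt_id) (by simp)
  have h_pos := deriv_sonicProfile_zero_pos_of_root hb hf hk hξ h_profile
  rw [(hasDerivAt_sonicProfile_zero hf).deriv] at h_pos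
  obtain ⟨Q, hQ, hQ0, hQ_deriv, h_int⟩ := exists_integral_div_sqrt_sub_eq
    (contDiffAt_sonicProfile_zero hf) (sonicProfile_zero f) (hasDerivAt_sonicProfile_zero hf)
    h_pos hg (by simp)
  refine ⟨Q, hQ, hQ0, ?_, ?_⟩
  · rw [hQ_deriv, hasDerivAt_div_one_sub_zero.deriv]
    field_simp
    norm_num
  · filter_upwards [hP, h_profile, hξ.eventually h_int,
      hξ.eventually (eventually_momentum_integral_eq hf_one hf1)]
      with c hP h_profile h_int h_momentum
    rw [hP, h_momentum c (hb2 ▸ h_profile), h_int, h_profile]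

theorem stmt_12_general {f F ξ P : ℝ → ℝ} {cs k c₀ : ℝ} (hf : ContDiffAt ℝ 3 f 1)
    (hf1 : f 1 = 0) (hf'1 : deriv f 1 < 0) (hcs : cs = √(-(2 * deriv f 1)))
    (hk : k = 2 * deriv (deriv f) 1 + 6 * deriv f 1) (hk0 : k ≠ 0)
    (hF : ∀ r, F r = ∫ ρ in r..1, f ρ) (hc₀cs : c₀ < cs)
    (hξpos : ∀ c ∈ Set.Ioo c₀ cs, 0 < ξ c)
    (hzero : ∀ c ∈ Set.Ioo c₀ cs, c ^ 2 * ξ c ^ 2 - 4 * (1 - ξ c) * F (1 - ξ c) = 0)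
    (hξ0 : Tendsto ξ (𝓝[<] cs) (𝓝 0))
    (hP : ∀ c ∈ Set.Ioo c₀ cs, P c = c / 2 * ∫ x in (0 : ℝ)..ξ c,
      x ^ 2 / ((1 - x) * √(-(c ^ 2 * x ^ 2 - 4 * (1 - x) * F (1 - x))))) :
    ∃ c₁ ∈ Set.Ioo c₀ cs,
      (∀ c ∈ Set.Ioo c₁ cs, DifferentiableAt ℝ P c) ∧
      Tendsto (fun c ↦ deriv P c / √(cs ^ 2 - c ^ 2)) (𝓝[<] cs)
        (𝓝 (-(18 * cs ^ 2) / k ^ 2)) := by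
  have hcs_arg : 0 < -(2 * deriv f 1) := by linarith
  have hcs_pos : 0 < cs := hcs ▸ sqrt_pos.2 hcs_arg
  have hcs_sq : cs ^ 2 = -(2 * deriv f 1) := hcs ▸ sq_sqrt hcs_arg.le
  have h_near : ∀ᶠ c in 𝓝[<] cs, c ∈ Set.Ioo c₀ cs := Ioo_mem_nhdsLT hc₀cs
  have hξ : Tendsto ξ (𝓝[<] cs) (𝓝[>] 0) :=
    tendsto_nhdsWithin_iff.2 ⟨hξ0, h_near.mono hξpos⟩
  simp only [hF] at hzero hP
  obtain ⟨Q, hQ, hQ0, hQ_deriv, hPQ⟩ := exists_momentum_eq_half_mul_sqrt_mul hcs_pos hcs_sq hf hf1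
    (hk ▸ hk0) hξ (h_near.mono hzero) (h_near.mono hP)
  have h_diff : ∀ᶠ c in 𝓝[<] cs, DifferentiableAt ℝ P c :=
    (eventually_hasDerivAt_half_mul_sqrt_mul hcs_pos hQ hPQ).mono fun _ hc ↦ hc.differentiableAt
  obtain ⟨c, hc, h_sub⟩ := (mem_nhdsLT_iff_exists_mem_Ico_Ioo_subset hc₀cs).1 h_diff
  obtain ⟨c₁, hcc₁, hc₁⟩ := exists_between hc.2
  refine ⟨c₁, ⟨hc.1.trans_lt hcc₁, hc₁⟩, fun x hx ↦ h_sub ⟨hcc₁.trans hx.1, hx.2⟩, ?_⟩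
  have h_lim := tendsto_deriv_div_sqrt_sq_sub_sq hcs_pos hQ hQ0 hPQ
  rw [hQ_deriv, ← hk] at h_lim
  convert h_lim using 2
  ring

/-- Transonic asymptotics of the derivative of the momentum:
`P'(c)/ν_c → -18c_s²/k²` as `c → c_s⁻`. -/
theorem stmt_12 (f : ℝ → ℝ) (U : Set ℝ) (hU : IsOpen U) (hUIcc : Set.Icc (0:ℝ) 1 ⊆ U)
    (hf : ContDiffOn ℝ 3 f U) (hf1 : f 1 = 0) (hf'1 : deriv f 1 < 0)
    (cs k : ℝ) (hcs : cs = Real.sqrt (-(2 * deriv f 1)))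
    (hk : k = 2 * deriv (deriv f) 1 + 6 * deriv f 1) (hk0 : k ≠ 0)
    (F : ℝ → ℝ) (hF : ∀ r, F r = ∫ ρ in r..1, f ρ)
    (c₀ : ℝ) (hc₀ : 0 < c₀) (hc₀cs : c₀ < cs)
    (ξ : ℝ → ℝ) (hξC1 : ContDiffOn ℝ 1 ξ (Set.Ioo c₀ cs))
    (hξmem : ∀ c ∈ Set.Ioo c₀ cs, ξ c ∈ Set.Ioo (0:ℝ) 1)
    (hzero : ∀ c ∈ Set.Ioo c₀ cs,
      c ^ 2 * (ξ c) ^ 2 - 4 * (1 - ξ c) * F (1 - ξ c) = 0)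
    (hneg : ∀ c ∈ Set.Ioo c₀ cs, ∀ x ∈ Set.Ioo 0 (ξ c),
      c ^ 2 * x ^ 2 - 4 * (1 - x) * F (1 - x) < 0)
    (hdN : ∀ c ∈ Set.Ioo c₀ cs,
      0 < deriv (fun x => c ^ 2 * x ^ 2 - 4 * (1 - x) * F (1 - x)) (ξ c))
    (hξ0 : Tendsto ξ (𝓝[<] cs) (𝓝 0))
    (P : ℝ → ℝ)
    (hP : ∀ c, P c = (c / 2) * ∫ x in (0:ℝ)..(ξ c),
      x ^ 2 / ((1 - x) * Real.sqrt (-(c ^ 2 * x ^ 2 - 4 * (1 - x) * F (1 - x))))) :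
    ∃ c₁ ∈ Set.Ioo c₀ cs,
      (∀ c ∈ Set.Ioo c₁ cs, DifferentiableAt ℝ P c) ∧
      Tendsto (fun c => deriv P c / Real.sqrt (cs ^ 2 - c ^ 2)) (𝓝[<] cs)
        (𝓝 (-(18 * cs ^ 2) / k ^ 2)) := by
  exact stmt_12_general (hf.contDiffAt (hU.mem_nhds (hUIcc ⟨zero_le_one, le_rfl⟩))) hf1 hf'1 hcs hk
    hk0 hF hc₀cs (fun c hc ↦ (hξmem c hc).1) hzero hξ0 fun c _ ↦ hP c
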